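/- arXiv:1809.03696 — 2 statements merged into one kernel-verified Lean document; each statement's English description precedes it below -/
import Mathlib

section
/- Let Γ be a connected finite simple graph on n vertices that is strongly regular with parameters (n, k, λ, μ) with 0 < k < n − 1, let r > s be the two real roots of x² + (μ − λ)x + (μ − k), and let f and g denote the multiplicities of r and s as eigenvalues of the adjacency matrix of Γ. If f ≠ g, then r and s are integers. -/
open Matrix

/-!
A matrix over a field `F` cannot tell conjugate eigenvalues `x` and `y` apart: both are images of
the same root in `F[X] / (minpoly F x)`, and an embedding of fields preserves the rank of
`A - x • 1`, so the two eigenspaces have the same dimension. Two roots of a monic quadratic over an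
integrally closed domain `R` are conjugate over the fraction field of `R` unless they lie in `R`.
-/

section Eigenspaces

open Module

variable {F E K m n : Type*} [Field F] [Field E] [Field K] [Fintype n]

theorem rank_map_algebraMap [Algebra E K] [Finite m] (A : Matrix m n E) :
    (A.map (algebraMap E K)).rank = A.rank := by
  classical
  cases nonempty_fintype m
  let bm := Pi.basisFun E m
  let bn := Pi.basisFun E n
  let T := toLin bn bm A
  have rank_eq : A.rank = finrank E T.range := rank_eq_finrank_range_toLin A bm bn
  have rank_map_eq : (A.map (algebraMap E K)).rank = finrank K (T.baseChange K).range := by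
    rw [rank_eq_finrank_range_toLin _ (Algebra.TensorProduct.basis K bm)
      (Algebra.TensorProduct.basis K bn), ← LinearMap.toMatrix_toLin bn bm A,
      ← LinearMap.toMatrix_baseChange, toLin_toMatrix]
  have finrank_ker_baseChange : finrank K (T.baseChange K).ker = finrank E T.ker :=
    (T.tensorKerEquiv K K).finrank_eq.symm.trans finrank_baseChange
  have nullity := T.finrank_range_add_finrank_ker
  have nullity_baseChange := (T.baseChange K).finrank_range_add_finrank_ker
  rw [finrank_baseChange] at nullity_baseChange
  lia

theorem finrank_eigenspace_mulVecLin_add_rank [DecidableEq n] (A : Matrix n n K) (x : K) :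
    finrank K (End.eigenspace A.mulVecLin x) + (A - x • 1).rank = Fintype.card n := by
  have shift : A.mulVecLin - x • 1 = (A - x • 1).mulVecLin :=
    LinearMap.ext fun v ↦ by simp
  rw [End.eigenspace_def, shift, Matrix.rank, add_comm, LinearMap.finrank_range_add_finrank_ker,
    finrank_fintype_fun_eq_card]

theorem finrank_eigenspace_map_ringHom (f : E →+* K) (A : Matrix n n E) (x : E) :
    finrank K (End.eigenspace (A.map f).mulVecLin (f x)) =
      finrank E (End.eigenspace A.mulVecLin x) := by
  classical
  let := f.toAlgebra
  have map_shift : A.map f - f x • 1 = (A - x • 1).map (algebraMap E K) := by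
    ext i j
    simp [one_apply, apply_ite f, RingHom.algebraMap_toAlgebra]
  have nullity_map := finrank_eigenspace_mulVecLin_add_rank (A.map f) (f x)
  rw [map_shift, rank_map_algebraMap, ← finrank_eigenspace_mulVecLin_add_rank A x] at nullity_map
  exact Nat.add_right_cancel nullity_map

theorem finrank_eigenspace_eq_of_isConjRoot [Algebra F K] (A : Matrix n n F) {x y : K}
    (hx : IsIntegral F x) (hxy : IsConjRoot F x y) :
    finrank K (End.eigenspace (A.map (algebraMap F K)).mulVecLin x) =
      finrank K (End.eigenspace (A.map (algebraMap F K)).mulVecLin y) := by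
  have : Fact (Irreducible (minpoly F x)) := ⟨minpoly.irreducible hx⟩
  let L := AdjoinRoot (minpoly F x)
  have finrank_eq (z : K) (hz : Polynomial.aeval z (minpoly F x) = 0) :
      finrank K (End.eigenspace (A.map (algebraMap F K)).mulVecLin z) =
        finrank L (End.eigenspace (A.map (algebraMap F L)).mulVecLin (AdjoinRoot.root _)) := by
    let σ : L →ₐ[F] K := AdjoinRoot.liftAlgHom _ (Algebra.ofId F K) z hz
    have map_root : σ (AdjoinRoot.root _) = z := AdjoinRoot.liftAlgHom_root ..
    have map_A : (A.map (algebraMap F L)).map σ = A.map (algebraMap F K) := by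
      ext i j
      exact σ.commutes (A i j)
    rw [← map_A, ← map_root]
    exact finrank_eigenspace_map_ringHom (σ : L →+* K) _ _
  rw [finrank_eq x (minpoly.aeval F x), finrank_eq y hxy.aeval_eq_zero]

end Eigenspaces

section Quadratic

open Polynomial

variable {R F K : Type*} [CommRing R] [Field F] [Field K] [Algebra F K]

theorem isConjRoot_of_natDegree_le_two {p : F[X]} (hp : p.Monic) (hdeg : p.natDegree ≤ 2)
    {x y : K} (hx : aeval x p = 0) (hy : aeval y p = 0) (hxF : x ∉ (algebraMap F K).range) :
    IsConjRoot F x y := by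
  have x_integral : IsIntegral F x := ⟨p, hp, hx⟩
  have p_eq_minpoly : p = minpoly F x :=
    eq_of_monic_of_dvd_of_natDegree_le (minpoly.monic x_integral) hp (minpoly.dvd F x hx) <|
      hdeg.trans <| (minpoly.two_le_natDegree_iff x_integral).2 hxF
  exact isConjRoot_of_aeval_eq_zero x_integral (p_eq_minpoly ▸ hy)

variable [IsIntegrallyClosed R] [Algebra R F] [IsFractionRing R F] [Algebra R K]
  [IsScalarTower R F K]

theorem exists_eq_algebraMap_of_not_isConjRoot {p : R[X]} (hp : p.Monic) (hdeg : p.natDegree ≤ 2)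
    {x y : K} (hx : aeval x p = 0) (hy : aeval y p = 0) (hxy : ¬ IsConjRoot F x y) :
    ∃ a : R, x = algebraMap R K a := by
  obtain ⟨q, rfl⟩ : x ∈ (algebraMap F K).range := by
    contrapose! hxy
    exact isConjRoot_of_natDegree_le_two (hp.map (algebraMap R F))
      (natDegree_map_le.trans hdeg) (by simpa using hx) (by simpa using hy) hxy
  have q_integral : IsIntegral R q :=
    (isIntegral_algebraMap_iff (algebraMap F K).injective).1 ⟨p, hp, hx⟩
  obtain ⟨a, rfl⟩ := IsIntegrallyClosed.isIntegral_iff.1 q_integral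
  exact ⟨a, (IsScalarTower.algebraMap_apply R F K a).symm⟩

theorem stmt_9_general {V : Type*} [Fintype V] (A : Matrix V V F) (b c : R)
    {r s : K} (hr : r ^ 2 + algebraMap R K b * r + algebraMap R K c = 0)
    (hs : s ^ 2 + algebraMap R K b * s + algebraMap R K c = 0)
    (hrs : Module.finrank K (Module.End.eigenspace (A.map (algebraMap F K)).mulVecLin r) ≠
      Module.finrank K (Module.End.eigenspace (A.map (algebraMap F K)).mulVecLin s)) :
    (∃ a : R, r = algebraMap R K a) ∧ (∃ a : R, s = algebraMap R K a) := by
  let p : R[X] := X ^ 2 + C b * X + C c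
  have p_monic : p.Monic := by unfold p; monicity!
  have p_natDegree : p.natDegree ≤ 2 := by unfold p; compute_degree
  have r_root : aeval r p = 0 := by simpa [p] using hr
  have s_root : aeval s p = 0 := by simpa [p] using hs
  have r_integral : IsIntegral F r := IsIntegral.tower_top (R := R) ⟨p, p_monic, r_root⟩
  have not_conj : ¬ IsConjRoot F r s :=
    fun conj ↦ hrs (finrank_eigenspace_eq_of_isConjRoot A r_integral conj)
  exact ⟨exists_eq_algebraMap_of_not_isConjRoot p_monic p_natDegree r_root s_root not_conj,
    exists_eq_algebraMap_of_not_isConjRoot p_monic p_natDegree s_root r_root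
      fun conj ↦ not_conj conj.symm⟩

end Quadratic

theorem map_adjMatrix {V α β : Type*} [NonAssocSemiring α] [NonAssocSemiring β] (Γ : SimpleGraph V)
    [DecidableRel Γ.Adj] (f : α →+* β) : (Γ.adjMatrix α).map f = Γ.adjMatrix β := by
  ext v w
  simp [apply_ite f]

/-- Integrality of restricted eigenvalues outside the half case: for a connected
strongly regular graph with parameters `(n, k, λ, μ)`, `0 < k < n − 1`, restricted
eigenvalues `r > s` and multiplicities `f`, `g`, if `f ≠ g` then `r` and `s` are
integers. -/
theorem stmt_9 {V : Type*} [Fintype V] [DecidableEq V]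
    (Γ : SimpleGraph V) [DecidableRel Γ.Adj]
    (n k l m : ℕ) (h : Γ.IsSRGWith n k l m) (hconn : Γ.Connected)
    (hk0 : 0 < k) (hkn : k + 1 < n)
    (r s : ℝ) (hrs : s < r)
    (hr : r ^ 2 + ((m : ℝ) - l) * r + ((m : ℝ) - k) = 0)
    (hs : s ^ 2 + ((m : ℝ) - l) * s + ((m : ℝ) - k) = 0)
    (f g : ℕ)
    (hf : f = Module.finrank ℝ
      (Module.End.eigenspace (Matrix.mulVecLin (Γ.adjMatrix ℝ)) r))
    (hg : g = Module.finrank ℝ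
      (Module.End.eigenspace (Matrix.mulVecLin (Γ.adjMatrix ℝ)) s))
    (hfg : f ≠ g) :
    (∃ a : ℤ, r = a) ∧ (∃ b : ℤ, s = b) := by
  subst hf hg
  rw [← map_adjMatrix Γ (algebraMap ℚ ℝ)] at hfg
  exact stmt_9_general (R := ℤ) _ (m - l) (m - k) (by simpa using hr) (by simpa using hs) hfg
end

section
/- Fix a natural number m ≥ 2 and equip V = (ZMod 2)^{2m} with the standard symplectic bilinear form B(x, y) = Σ_{i=0}^{m−1} (x_{2i} y_{2i+1} + x_{2i+1} y_{2i}). Let Γ' be the simple graph whose vertices are the nonzero vectors of V, with distinct x and y adjacent exactly when B(x, y) = 0. Then Γ' is strongly regular with parameters (2^{2m} − 1, 2^{2m−1} − 2, 2^{2m−2} − 3, 2^{2m−2} − 1), and the eigenvalues of its adjacency matrix over ℝ are 2^{2m−1} − 2 with multiplicity 1, 2^{m−1} − 1 with multiplicity 2^{2m−1} + 2^{m−1} − 1, and −2^{m−1} − 1 with multiplicity 2^{2m−1} − 2^{m−1} − 1. -/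
open Matrix

open scoped Classical

/-- The standard symplectic bilinear form on `(ZMod 2)^(2m)`:
`B(x, y) = Σ_{i<m} (x_{2i} y_{2i+1} + x_{2i+1} y_{2i})`. -/
def sympForm (m : ℕ) (x y : Fin (2 * m) → ZMod 2) : ZMod 2 :=
  ∑ i : Fin m,
    (x ⟨2 * i.val, by have := i.isLt; omega⟩ * y ⟨2 * i.val + 1, by have := i.isLt; omega⟩
      + x ⟨2 * i.val + 1, by have := i.isLt; omega⟩ * y ⟨2 * i.val, by have := i.isLt; omega⟩)

/-- The codiagram (commuting graph) of the 3-transposition group `Sp_{2m}(2)`: the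
graph on nonzero vectors of `(ZMod 2)^(2m)`, with distinct `x`, `y` adjacent exactly
when `B(x, y) = 0`. -/
noncomputable def sympCograph (m : ℕ) :
    SimpleGraph {x : Fin (2 * m) → ZMod 2 // x ≠ 0} :=
  SimpleGraph.fromRel (fun a b => sympForm m a b = 0)

/-!
The neighbours of `x`, and the common neighbours of `x ≠ y`, form the orthogonal complements of
`{x}` and `{x, y}` with `0` and whichever of `x`, `y` they contain removed. Over a field with two
elements distinct nonzero vectors are linearly independent, so nondegeneracy gives the sizes of
these complements, and with them strong regularity.

If `r + s = λ - μ` and `r * s = μ - k`, then the adjacency matrix `A` of a strongly regular graph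
satisfies `(A - r) * (A - s) = μ J`, where `J` is the all-ones matrix. The projection onto the
`r`-eigenspace is therefore an explicit linear combination of `A`, `1` and `J`, and its trace is the
multiplicity of `r`.
-/

section StronglyRegular

variable {V : Type*} [Fintype V] {G : SimpleGraph V} [DecidableRel G.Adj]

lemma of_one_mulVec {R : Type*} [NonAssocSemiring R] (f : V → R) :
    (of 1 : Matrix V V R) *ᵥ f = Function.const V (∑ v, f v) := by
  ext v
  simp [mulVec, dotProduct]

lemma sum_eq_zero_of_adjMatrix_mulVec_eq_smul {K : Type*} [Field K] {k : ℕ} {r : K}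
    (h : G.IsRegularOfDegree k) (hr : (k : K) ≠ r) {f : V → K}
    (hf : G.adjMatrix K *ᵥ f = r • f) : ∑ v, f v = 0 := by
  have hsum : (k : K) * ∑ v, f v = r * ∑ v, f v := by
    have hdot := dotProduct_mulVec 1 (G.adjMatrix K) f
    have hone : 1 ᵥ* G.adjMatrix K = (k : K) • 1 := by
      ext v
      simp [h.degree_eq v]
    rw [hf, hone, dotProduct_smul, smul_dotProduct, one_dotProduct] at hdot
    exact hdot.symm
  exact (mul_eq_mul_right_iff.1 hsum).resolve_left hr

variable {n k l u : ℕ}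

lemma adjMatrix_sub_mul_of_one [DecidableEq V] {R : Type*} [CommRing R]
    (h : G.IsRegularOfDegree k) (t : R) :
    (G.adjMatrix R - t • 1) * of 1 = ((k : R) - t) • of 1 := by
  ext v w
  simp [sub_mul, h.degree_eq v]

lemma adjMatrix_sub_mul_adjMatrix_sub [DecidableEq V] {R : Type*} [CommRing R]
    (h : G.IsSRGWith n k l u) {r s : R} (hadd : r + s = l - u) (hmul : r * s = u - k) :
    (G.adjMatrix R - r • 1) * (G.adjMatrix R - s • 1) = (u : R) • of 1 := by
  have hcompl : Gᶜ.adjMatrix R = of 1 - 1 - G.adjMatrix R := by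
    rw [← SimpleGraph.adjMatrix_completeGraph_eq_of_one_sub_one R,
      ← SimpleGraph.IsCompl.adjMatrix_add_adjMatrix_eq_adjMatrix_completeGraph R
        (isCompl_compl (x := G)), add_sub_cancel_left]
  have hsq : G.adjMatrix R * G.adjMatrix R =
      (k : R) • 1 + (l : R) • G.adjMatrix R + (u : R) • (of 1 - 1 - G.adjMatrix R) := by
    simpa only [hcompl, pow_two, Nat.cast_smul_eq_nsmul] using h.matrix_eq (α := R)
  calc (G.adjMatrix R - r • 1) * (G.adjMatrix R - s • 1)
      = G.adjMatrix R * G.adjMatrix R - (r + s) • G.adjMatrix R + (r * s) • 1 := by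
        simp only [sub_mul, mul_sub, mul_smul_comm, smul_mul_assoc, mul_one, one_mul]
        module
    _ = (u : R) • of 1 := by
        rw [hsq, hadd, hmul]
        module

variable {K : Type*} [Field K] {r s : K}

lemma degree_sub_mul_degree_sub [Nonempty V] (h : G.IsSRGWith n k l u)
    (hadd : r + s = l - u) (hmul : r * s = u - k) : ((k : K) - r) * (k - s) = u * n := by
  have hones := congrArg (· * (of 1 : Matrix V V K)) (adjMatrix_sub_mul_adjMatrix_sub h hadd hmul)
  simp only [Matrix.mul_assoc, adjMatrix_sub_mul_of_one h.regular, mul_smul_comm, smul_mul_assoc,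
    smul_smul] at hones
  inhabit V
  simpa [mul_apply, h.card, mul_comm] using congrFun₂ hones default default

lemma eigenspace_adjMatrix_degree (h : G.IsSRGWith n k l u)
    (hadd : r + s = l - u) (hmul : r * s = u - k) (hr : (k : K) ≠ r) (hs : (k : K) ≠ s) :
    Module.End.eigenspace (G.adjMatrix K).mulVecLin (k : K) = K ∙ (Function.const V 1) := by
  ext f
  rw [Module.End.mem_eigenspace_iff, mulVecLin_apply, Submodule.mem_span_singleton]
  constructor
  · intro hf
    have hsub (t : K) : (G.adjMatrix K - t • 1) *ᵥ f = ((k : K) - t) • f := by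
      rw [sub_mulVec, smul_mulVec, one_mulVec, hf, sub_smul]
    have hscaled : ((k - r) * (k - s)) • f = ((u : K) * ∑ v, f v) • Function.const V 1 := by
      have hquad := congrArg (· *ᵥ f) (adjMatrix_sub_mul_adjMatrix_sub h hadd hmul)
      simp only [← mulVec_mulVec, hsub, mulVec_smul, smul_mulVec, of_one_mulVec, smul_smul,
        mul_comm ((k : K) - s)] at hquad
      rw [hquad]
      ext v
      simp
    refine ⟨((k - r) * (k - s))⁻¹ * (u * ∑ v, f v), ?_⟩
    rw [mul_smul, ← hscaled, inv_smul_smul₀ (mul_ne_zero (sub_ne_zero.2 hr) (sub_ne_zero.2 hs))]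
  · rintro ⟨c, rfl⟩
    ext v
    simp [h.regular.degree_eq v, mul_comm]

lemma finrank_eigenspace_adjMatrix_degree [Nonempty V] (h : G.IsSRGWith n k l u)
    (hadd : r + s = l - u) (hmul : r * s = u - k) (hr : (k : K) ≠ r) (hs : (k : K) ≠ s) :
    Module.finrank K (Module.End.eigenspace (G.adjMatrix K).mulVecLin (k : K)) = 1 := by
  rw [eigenspace_adjMatrix_degree h hadd hmul hr hs]
  exact finrank_span_singleton (by simp)

/-- For `A` the adjacency matrix of a strongly regular graph of degree `κ` whose other eigenvalues
are `r` and `s`, the projection onto the `r`-eigenspace along the other two: the polynomial in `A`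
taking the value `1` at `r` and `0` at `s`, minus its component along the constant vectors. -/
def restrictedEigenprojection [DecidableEq V] (A : Matrix V V K) (κ r s : K) : Matrix V V K :=
  (r - s)⁻¹ • (A - s • 1 - ((κ - s) / Fintype.card V) • of 1)

lemma adjMatrix_sub_mul_restrictedEigenprojection [DecidableEq V] (h : G.IsSRGWith n k l u)
    (hadd : r + s = l - u) (hmul : r * s = u - k) (hn : (n : K) ≠ 0) :
    (G.adjMatrix K - r • 1) * restrictedEigenprojection (G.adjMatrix K) k r s = 0 := by
  have hpos : 0 < n := Nat.pos_of_ne_zero (ne_of_apply_ne (Nat.cast : ℕ → K) (by simpa using hn))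
  have : Nonempty V := Fintype.card_pos_iff.1 (h.card ▸ hpos)
  rw [restrictedEigenprojection, mul_smul_comm, mul_sub,
    adjMatrix_sub_mul_adjMatrix_sub h hadd hmul, mul_smul_comm,
    adjMatrix_sub_mul_of_one h.regular, smul_smul, h.card, div_mul_eq_mul_div, mul_comm (_ - s),
    degree_sub_mul_degree_sub h hadd hmul, mul_div_cancel_right₀ _ hn, sub_self, smul_zero]

lemma isProj_restrictedEigenprojection [DecidableEq V] (h : G.IsSRGWith n k l u)
    (hadd : r + s = l - u) (hmul : r * s = u - k) (hn : (n : K) ≠ 0) (hr : (k : K) ≠ r)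
    (hrs : r ≠ s) :
    LinearMap.IsProj (Module.End.eigenspace (G.adjMatrix K).mulVecLin r)
      (restrictedEigenprojection (G.adjMatrix K) k r s).toLin' := by
  constructor
  · intro f
    have hann := adjMatrix_sub_mul_restrictedEigenprojection h hadd hmul hn
    rw [sub_mul, smul_mul_assoc, one_mul, sub_eq_zero] at hann
    rw [Module.End.mem_eigenspace_iff, mulVecLin_apply, toLin'_apply, mulVec_mulVec, hann,
      smul_mulVec]
  · intro f hf
    rw [Module.End.mem_eigenspace_iff, mulVecLin_apply] at hf
    have hones : (of 1 : Matrix V V K) *ᵥ f = 0 := by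
      rw [of_one_mulVec, sum_eq_zero_of_adjMatrix_mulVec_eq_smul h.regular hr hf]
      rfl
    rw [toLin'_apply, restrictedEigenprojection, smul_mulVec, sub_mulVec, sub_mulVec, smul_mulVec,
      smul_mulVec, one_mulVec, hf, hones, smul_zero, sub_zero, ← sub_smul,
      inv_smul_smul₀ (sub_ne_zero.2 hrs)]

lemma cast_finrank_eigenspace_adjMatrix (h : G.IsSRGWith n k l u)
    (hadd : r + s = l - u) (hmul : r * s = u - k) (hn : (n : K) ≠ 0) (hr : (k : K) ≠ r)
    (hrs : r ≠ s) :
    (Module.finrank K (Module.End.eigenspace (G.adjMatrix K).mulVecLin r) : K) =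
      -(k + (n - 1) * s) / (r - s) := by
  have htrace : (of 1 : Matrix V V K).trace = n := by simp [trace, h.card]
  rw [← (isProj_restrictedEigenprojection h hadd hmul hn hr hrs).trace, trace_toLin'_eq,
    restrictedEigenprojection]
  simp only [trace_smul, trace_sub, trace_one, SimpleGraph.trace_adjMatrix, htrace, h.card,
    smul_eq_mul]
  field_simp
  ring

lemma symplectic_eigenvalues_pairwise_ne [CharZero K] {t : ℕ} (ht : 2 ≤ t) :
    2 * (t : K) ^ 2 - 2 ≠ t - 1 ∧ 2 * (t : K) ^ 2 - 2 ≠ -t - 1 ∧ (t : K) - 1 ≠ -t - 1 := by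
  have hpred : (t : K) - 1 ≠ 0 := sub_ne_zero.2 (by norm_cast; lia)
  have htwo_mul_pred : 2 * (t : K) - 1 ≠ 0 := sub_ne_zero.2 (by norm_cast; lia)
  have hsucc : (t : K) + 1 ≠ 0 := Nat.cast_add_one_ne_zero t
  have htwo_mul_succ : 2 * (t : K) + 1 ≠ 0 := by norm_cast
  have htwo_mul : 2 * (t : K) ≠ 0 := by norm_cast; lia
  refine ⟨sub_ne_zero.1 ?_, sub_ne_zero.1 ?_, sub_ne_zero.1 ?_⟩
  · convert mul_ne_zero hpred htwo_mul_succ using 1; ring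
  · convert mul_ne_zero hsucc htwo_mul_pred using 1; ring
  · convert htwo_mul using 1; ring

lemma finrank_eigenspace_adjMatrix_of_symplectic_parameters [CharZero K] {t : ℕ} (ht : 2 ≤ t)
    (h : G.IsSRGWith (4 * t ^ 2 - 1) (2 * t ^ 2 - 2) (t ^ 2 - 3) (t ^ 2 - 1)) :
    Module.finrank K (Module.End.eigenspace (G.adjMatrix K).mulVecLin (2 * (t : K) ^ 2 - 2)) = 1 ∧
    Module.finrank K (Module.End.eigenspace (G.adjMatrix K).mulVecLin ((t : K) - 1)) =
      2 * t ^ 2 + t - 1 ∧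
    Module.finrank K (Module.End.eigenspace (G.adjMatrix K).mulVecLin (-(t : K) - 1)) =
      2 * t ^ 2 - t - 1 := by
  have hsq : t + 2 ≤ t ^ 2 := by nlinarith
  have hn : ((4 * t ^ 2 - 1 : ℕ) : K) = 4 * t ^ 2 - 1 := by
    rw [Nat.cast_sub (by lia)]; norm_cast
  have hk : ((2 * t ^ 2 - 2 : ℕ) : K) = 2 * t ^ 2 - 2 := by
    rw [Nat.cast_sub (by lia)]; norm_cast
  have hl : ((t ^ 2 - 3 : ℕ) : K) = t ^ 2 - 3 := by rw [Nat.cast_sub (by lia)]; norm_cast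
  have hu : ((t ^ 2 - 1 : ℕ) : K) = t ^ 2 - 1 := by rw [Nat.cast_sub (by lia)]; norm_cast
  have hn0 : ((4 * t ^ 2 - 1 : ℕ) : K) ≠ 0 := Nat.cast_ne_zero.2 (by lia)
  obtain ⟨hkr, hks, hrs⟩ := symplectic_eigenvalues_pairwise_ne (K := K) ht
  rw [← hk] at hkr hks
  have hadd : ((t : K) - 1) + (-t - 1) = (t ^ 2 - 3 : ℕ) - (t ^ 2 - 1 : ℕ) := by
    rw [hl, hu]; ring
  have hmul : ((t : K) - 1) * (-t - 1) = (t ^ 2 - 1 : ℕ) - (2 * t ^ 2 - 2 : ℕ) := by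
    rw [hu, hk]; ring
  have : Nonempty V := Fintype.card_pos_iff.1 (by rw [h.card]; lia)
  refine ⟨hk ▸ finrank_eigenspace_adjMatrix_degree h hadd hmul hkr hks, ?_, ?_⟩ <;>
    apply Nat.cast_injective (R := K)
  · rw [cast_finrank_eigenspace_adjMatrix h hadd hmul hn0 hkr hrs, hn, hk, Nat.cast_sub (by lia)]
    push_cast
    field_simp
    ring
  · rw [cast_finrank_eigenspace_adjMatrix h (by rw [add_comm, hadd]) (by rw [mul_comm, hmul]) hn0
      hks hrs.symm, hn, hk, Nat.cast_sub (by lia), Nat.cast_sub (by lia)]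
    push_cast
    field_simp
    ring

end StronglyRegular

section PerpGraph

lemma ncard_setOf_forall_apply_eq_zero {K V ι : Type*} [Field K] [AddCommGroup V] [Module K V]
    [Module.Finite K V] [Fintype ι] {B : LinearMap.BilinForm K V} (hB : B.Nondegenerate)
    {v : ι → V} (hv : LinearIndependent K v) :
    {z | ∀ i, B (v i) z = 0}.ncard = Nat.card K ^ (Module.finrank K V - Fintype.card ι) := by
  have hset : {z | ∀ i, B (v i) z = 0} =
      (B.orthogonal (Submodule.span K (Set.range v)) : Set V) := by
    ext z
    have hspan : Submodule.span K (Set.range v) ≤ LinearMap.ker (B.flip z) ↔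
        ∀ i, B (v i) z = 0 := by
      simp [Submodule.span_le, Set.range_subset_iff]
    exact hspan.symm
  rw [hset, ← Nat.card_coe_set_eq, ← finrank_span_eq_card hv,
    ← LinearMap.BilinForm.finrank_orthogonal hB]
  exact Module.natCard_eq_pow_finrank (V := B.orthogonal (Submodule.span K (Set.range v)))

/-- The perpendicularity graph of `B` on the nonzero vectors. Since `SimpleGraph.fromRel`
symmetrizes, adjacency of distinct `x`, `y` amounts to `B x y = 0` when `B` is reflexive. -/
def perpGraph {R M : Type*} [CommSemiring R] [AddCommMonoid M] [Module R M]
    (B : LinearMap.BilinForm R M) : SimpleGraph {x : M // x ≠ 0} :=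
  SimpleGraph.fromRel fun x y => B x y = 0

namespace perpGraph

lemma adj_iff {R M : Type*} [CommSemiring R] [AddCommMonoid M] [Module R M]
    {B : LinearMap.BilinForm R M} (hB : B.IsRefl) {x y : {x : M // x ≠ 0}} :
    (perpGraph B).Adj x y ↔ x ≠ y ∧ B x y = 0 := by
  rw [perpGraph, SimpleGraph.fromRel_adj, or_iff_left_of_imp (hB _ _)]

variable {V : Type*} [AddCommGroup V] [Module (ZMod 2) V] {B : LinearMap.BilinForm (ZMod 2) V}

lemma card_vertices [Fintype V] [DecidableEq V] :
    Fintype.card {x : V // x ≠ 0} = 2 ^ Module.finrank (ZMod 2) V - 1 := by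
  rw [Fintype.card_subtype_compl, Module.card_eq_pow_finrank (K := ZMod 2), ZMod.card,
    Fintype.card_unique]

lemma ncard_setOf_apply_eq_zero [Finite V] (hB : B.Nondegenerate) {x : V} (hx : x ≠ 0) :
    {z | B x z = 0}.ncard = 2 ^ (Module.finrank (ZMod 2) V - 1) := by
  simpa using ncard_setOf_forall_apply_eq_zero hB (v := ![x]) (by simpa)

lemma ncard_setOf_apply_eq_zero_and_apply_eq_zero [Finite V] (hB : B.Nondegenerate) {x y : V}
    (hx : x ≠ 0) (hy : y ≠ 0) (hxy : x ≠ y) :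
    {z | B x z = 0 ∧ B y z = 0}.ncard = 2 ^ (Module.finrank (ZMod 2) V - 2) := by
  have hv : LinearIndependent (ZMod 2) ![x, y] := by
    have hscalar : ∀ a : ZMod 2, a = 0 ∨ a = 1 := by decide
    rw [LinearIndependent.pair_iff' hx]
    intro a
    obtain rfl | rfl := hscalar a
    · simpa using hy.symm
    · simpa using hxy
  simpa using ncard_setOf_forall_apply_eq_zero hB hv

lemma image_neighborSet (hB : B.IsAlt) (x : {x : V // x ≠ 0}) :
    Subtype.val '' (perpGraph B).neighborSet x = {z | B x z = 0} \ {0, x.1} := by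
  ext z
  simp only [Set.mem_image, SimpleGraph.mem_neighborSet, adj_iff hB.isRefl, Subtype.ext_iff, ne_eq,
    Subtype.exists, exists_and_left, exists_prop, exists_eq_right_right, Set.mem_sdiff,
    Set.mem_ofPred_eq, Set.mem_insert_iff, Set.mem_singleton_iff]
  grind

lemma image_commonNeighbors (hB : B.IsAlt) (x y : {x : V // x ≠ 0}) :
    Subtype.val '' (perpGraph B).commonNeighbors x y =
      {z | B x z = 0 ∧ B y z = 0} \ {0, x.1, y.1} := by
  ext z
  simp only [Set.mem_image, SimpleGraph.mem_commonNeighbors, adj_iff hB.isRefl, Subtype.ext_iff,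
    ne_eq, Subtype.exists, exists_and_left, exists_prop, exists_eq_right_right, Set.mem_sdiff,
    Set.mem_ofPred_eq, Set.mem_insert_iff, Set.mem_singleton_iff]
  grind

lemma ncard_neighborSet [Finite V] (hB : B.IsAlt) (hB' : B.Nondegenerate) (x : {x : V // x ≠ 0}) :
    ((perpGraph B).neighborSet x).ncard = 2 ^ (Module.finrank (ZMod 2) V - 1) - 2 := by
  have hsub : {0, x.1} ⊆ {z | B x z = 0} := by
    simp [Set.insert_subset_iff, hB.self_eq_zero]
  rw [← Set.ncard_image_of_injective _ Subtype.val_injective, image_neighborSet hB,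
    Set.ncard_sdiff hsub, ncard_setOf_apply_eq_zero hB' x.2, Set.ncard_pair x.2.symm]

lemma ncard_commonNeighbors_of_adj [Finite V] (hB : B.IsAlt) (hB' : B.Nondegenerate)
    {x y : {x : V // x ≠ 0}} (hxy : (perpGraph B).Adj x y) :
    ((perpGraph B).commonNeighbors x y).ncard = 2 ^ (Module.finrank (ZMod 2) V - 2) - 3 := by
  obtain ⟨hne, hperp⟩ := (adj_iff hB.isRefl).1 hxy
  have hne' : x.1 ≠ y.1 := Subtype.coe_ne_coe.2 hne
  have hsub : {0, x.1, y.1} ⊆ {z | B x z = 0 ∧ B y z = 0} := by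
    simp [Set.insert_subset_iff, hB.self_eq_zero, hperp, hB.isRefl _ _ hperp]
  have hcard : ({0, x.1, y.1} : Set V).ncard = 3 :=
    Set.ncard_eq_three.2 ⟨0, x, y, x.2.symm, y.2.symm, hne', rfl⟩
  rw [← Set.ncard_image_of_injective _ Subtype.val_injective, image_commonNeighbors hB,
    Set.ncard_sdiff hsub, ncard_setOf_apply_eq_zero_and_apply_eq_zero hB' x.2 y.2 hne', hcard]

lemma ncard_commonNeighbors_of_not_adj [Finite V] (hB : B.IsAlt) (hB' : B.Nondegenerate)
    {x y : {x : V // x ≠ 0}} (hne : x ≠ y) (hxy : ¬ (perpGraph B).Adj x y) :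
    ((perpGraph B).commonNeighbors x y).ncard = 2 ^ (Module.finrank (ZMod 2) V - 2) - 1 := by
  have hperp : B x y ≠ 0 := fun h => hxy ((adj_iff hB.isRefl).2 ⟨hne, h⟩)
  have hperp' : B y x ≠ 0 := fun h => hperp (hB.isRefl _ _ h)
  have hset : {z | B x z = 0 ∧ B y z = 0} \ {0, x.1, y.1} = {z | B x z = 0 ∧ B y z = 0} \ {0} := by
    ext z
    simp only [Set.mem_sdiff, Set.mem_ofPred_eq, Set.mem_insert_iff, Set.mem_singleton_iff]
    grind
  rw [← Set.ncard_image_of_injective _ Subtype.val_injective, image_commonNeighbors hB, hset,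
    Set.ncard_sdiff_singleton_of_mem (by simp),
    ncard_setOf_apply_eq_zero_and_apply_eq_zero hB' x.2 y.2 (Subtype.coe_ne_coe.2 hne)]

theorem isSRGWith [Fintype V] [DecidableEq V] [DecidableRel (perpGraph B).Adj] (hB : B.IsAlt)
    (hB' : B.Nondegenerate) :
    (perpGraph B).IsSRGWith (2 ^ Module.finrank (ZMod 2) V - 1)
      (2 ^ (Module.finrank (ZMod 2) V - 1) - 2) (2 ^ (Module.finrank (ZMod 2) V - 2) - 3)
      (2 ^ (Module.finrank (ZMod 2) V - 2) - 1) where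
  card := card_vertices
  regular x := by
    rw [← SimpleGraph.card_neighborSet_eq_degree, Fintype.card_eq_nat_card, Nat.card_coe_set_eq,
      ncard_neighborSet hB hB']
  of_adj x y hxy := by
    rw [Fintype.card_eq_nat_card, Nat.card_coe_set_eq, ncard_commonNeighbors_of_adj hB hB' hxy]
  of_not_adj x y hne hxy := by
    rw [Fintype.card_eq_nat_card, Nat.card_coe_set_eq,
      ncard_commonNeighbors_of_not_adj hB hB' hne hxy]

end perpGraph

end PerpGraph

namespace sympForm

/-- `sympForm m` as a bundled bilinear form. -/
def bilinForm (m : ℕ) : LinearMap.BilinForm (ZMod 2) (Fin (2 * m) → ZMod 2) :=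
  LinearMap.mk₂ (ZMod 2) (sympForm m)
    (fun x x' y => by
      simp only [sympForm, Pi.add_apply, ← Finset.sum_add_distrib]
      exact Finset.sum_congr rfl fun _ _ => by ring)
    (fun c x y => by
      simp only [sympForm, Pi.smul_apply, smul_eq_mul, Finset.mul_sum]
      exact Finset.sum_congr rfl fun _ _ => by ring)
    (fun x y y' => by
      simp only [sympForm, Pi.add_apply, ← Finset.sum_add_distrib]
      exact Finset.sum_congr rfl fun _ _ => by ring)
    (fun c x y => by
      simp only [sympForm, Pi.smul_apply, smul_eq_mul, Finset.mul_sum]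
      exact Finset.sum_congr rfl fun _ _ => by ring)

lemma bilinForm_isAlt (m : ℕ) : (bilinForm m).IsAlt := fun x => by
  change sympForm m x x = 0
  exact Finset.sum_eq_zero fun i _ => by rw [mul_comm, CharTwo.add_self_eq_zero]

lemma apply_single_odd {m : ℕ} (x : Fin (2 * m) → ZMod 2) (i : Fin m) :
    sympForm m x (Pi.single ⟨2 * i + 1, by lia⟩ 1) = x ⟨2 * i, by lia⟩ := by
  simp only [sympForm, Pi.single_apply, Fin.ext_iff]
  rw [Finset.sum_eq_single i]
  · simp
  · intro j _ hj
    have : j.val ≠ i.val := Fin.val_ne_of_ne hj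
    rw [if_neg (by lia), if_neg (by lia)]; simp
  · simp

lemma apply_single_even {m : ℕ} (x : Fin (2 * m) → ZMod 2) (i : Fin m) :
    sympForm m x (Pi.single ⟨2 * i, by lia⟩ 1) = x ⟨2 * i + 1, by lia⟩ := by
  simp only [sympForm, Pi.single_apply, Fin.ext_iff]
  rw [Finset.sum_eq_single i]
  · simp
  · intro j _ hj
    have : j.val ≠ i.val := Fin.val_ne_of_ne hj
    rw [if_neg (by lia), if_neg (by lia)]; simp
  · simp

lemma bilinForm_nondegenerate (m : ℕ) : (bilinForm m).Nondegenerate := by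
  refine (bilinForm_isAlt m).isRefl.nondegenerate_iff_separatingLeft.2 fun x hx => ?_
  ext ⟨j, hj⟩
  obtain ⟨i, rfl | rfl⟩ := Nat.even_or_odd' j
  · exact (apply_single_odd x ⟨i, by lia⟩).symm.trans (hx _)
  · exact (apply_single_even x ⟨i, by lia⟩).symm.trans (hx _)

end sympForm

theorem stmt_16_general {V : Type*} [AddCommGroup V] [Module (ZMod 2) V] [Fintype V]
    [DecidableEq V] {B : LinearMap.BilinForm (ZMod 2) V} [DecidableRel (perpGraph B).Adj]
    (hB : B.IsAlt) (hB' : B.Nondegenerate) {m : ℕ} (hV : Module.finrank (ZMod 2) V = 2 * m)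
    (hm : 2 ≤ m) :
    (perpGraph B).IsSRGWith (2 ^ (2 * m) - 1) (2 ^ (2 * m - 1) - 2)
      (2 ^ (2 * m - 2) - 3) (2 ^ (2 * m - 2) - 1) ∧
    Module.finrank ℝ (Module.End.eigenspace
      (Matrix.mulVecLin ((perpGraph B).adjMatrix ℝ)) ((2 : ℝ) ^ (2 * m - 1) - 2)) = 1 ∧
    Module.finrank ℝ (Module.End.eigenspace
      (Matrix.mulVecLin ((perpGraph B).adjMatrix ℝ)) ((2 : ℝ) ^ (m - 1) - 1))
      = 2 ^ (2 * m - 1) + 2 ^ (m - 1) - 1 ∧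
    Module.finrank ℝ (Module.End.eigenspace
      (Matrix.mulVecLin ((perpGraph B).adjMatrix ℝ)) (-(2 : ℝ) ^ (m - 1) - 1))
      = 2 ^ (2 * m - 1) - 2 ^ (m - 1) - 1 := by
  have hpow1 : 2 ^ (2 * m - 1) = 2 * (2 ^ (m - 1)) ^ 2 := by
    rw [← pow_mul, ← pow_succ']; congr 1; lia
  have hpow2 : 2 ^ (2 * m - 2) = (2 ^ (m - 1)) ^ 2 := by
    rw [← pow_mul]; congr 1; lia
  have hpow : 2 ^ (2 * m) = 4 * (2 ^ (m - 1)) ^ 2 := by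
    rw [← hpow2, show 2 * m = 2 * m - 2 + 2 by lia, pow_add]; simp [mul_comm]
  have ht : 2 ≤ 2 ^ (m - 1) := le_self_pow₀ one_le_two (by lia)
  have hsrg := hV ▸ perpGraph.isSRGWith hB hB'
  refine ⟨hsrg, ?_⟩
  rw [hpow, hpow1, hpow2] at hsrg
  have hspec := finrank_eigenspace_adjMatrix_of_symplectic_parameters (K := ℝ) ht hsrg
  have hcast : 2 * ((2 ^ (m - 1) : ℕ) : ℝ) ^ 2 = 2 ^ (2 * m - 1) := mod_cast hpow1.symm
  rwa [hcast, ← hpow1, Nat.cast_pow, Nat.cast_ofNat] at hspec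

/-- For `m ≥ 2`, the graph on the nonzero vectors of the symplectic space
`(ZMod 2)^(2m)` (distinct vectors adjacent iff perpendicular) is strongly regular
with parameters `(2^(2m) − 1, 2^(2m−1) − 2, 2^(2m−2) − 3, 2^(2m−2) − 1)`, and the
eigenvalues of its adjacency matrix over `ℝ` are `2^(2m−1) − 2` with multiplicity
`1`, `2^(m−1) − 1` with multiplicity `2^(2m−1) + 2^(m−1) − 1`, and `−2^(m−1) − 1`
with multiplicity `2^(2m−1) − 2^(m−1) − 1`. -/
theorem stmt_16 (m : ℕ) (hm : 2 ≤ m) :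
    (sympCograph m).IsSRGWith (2 ^ (2 * m) - 1) (2 ^ (2 * m - 1) - 2)
      (2 ^ (2 * m - 2) - 3) (2 ^ (2 * m - 2) - 1) ∧
    Module.finrank ℝ (Module.End.eigenspace
      (Matrix.mulVecLin ((sympCograph m).adjMatrix ℝ)) ((2 : ℝ) ^ (2 * m - 1) - 2)) = 1 ∧
    Module.finrank ℝ (Module.End.eigenspace
      (Matrix.mulVecLin ((sympCograph m).adjMatrix ℝ)) ((2 : ℝ) ^ (m - 1) - 1))
      = 2 ^ (2 * m - 1) + 2 ^ (m - 1) - 1 ∧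
    Module.finrank ℝ (Module.End.eigenspace
      (Matrix.mulVecLin ((sympCograph m).adjMatrix ℝ)) (-(2 : ℝ) ^ (m - 1) - 1))
      = 2 ^ (2 * m - 1) - 2 ^ (m - 1) - 1 := by
  exact stmt_16_general (sympForm.bilinForm_isAlt m) (sympForm.bilinForm_nondegenerate m)
    (by simp) hm
end
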